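/- Let A be a commutative ring, let γ, δ, s, t ∈ A, let q(X,Y) = X² + γXY + δY², let R = A[X,Y]/(q(X,Y) − q(s,t)), and let u, v be the images of X, Y in R. Let α be the R-linear endomorphism of R² given by the matrix [[δv + δt + γu, u + s + γt], [−(u − s), v − t]]. Then the R-linear map ρ : R² → R defined by ρ(a, b) = (v − t)·a − (u + s + γt)·b has image equal to the ideal K = (v − t, u + s + γt) of R and kernel equal to the image of α; consequently the cokernel of α is isomorphic as an R-module to the ideal K. -/

import Mathlib

noncomputable section
open MvPolynomial

/-- `q(X,Y) - q(s,t)` in `A[X,Y]`, where `q(X,Y) = X² + γXY + δY²`. -/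
def keyRel (A : Type*) [CommRing A] (γ δ s t : A) : MvPolynomial (Fin 2) A :=
  X 0 ^ 2 + C γ * X 0 * X 1 + C δ * X 1 ^ 2 - C (s ^ 2 + γ * s * t + δ * t ^ 2)

/-- `R = A[X,Y]/(q(X,Y) - q(s,t))`. -/
abbrev KeyRing (A : Type*) [CommRing A] (γ δ s t : A) :=
  MvPolynomial (Fin 2) A ⧸ Ideal.span {keyRel A γ δ s t}

/-- The quotient map `A[X,Y] → R`. -/
def kmk (A : Type*) [CommRing A] (γ δ s t : A) :
    MvPolynomial (Fin 2) A →+* KeyRing A γ δ s t :=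
  Ideal.Quotient.mk (Ideal.span {keyRel A γ δ s t})

/-- The `R`-linear map `R² → R`, `(a, b) ↦ c·a - d·b`. -/
def pairMap {R : Type*} [CommRing R] (c d : R) : (Fin 2 → R) →ₗ[R] R where
  toFun a := c * a 0 - d * a 1
  map_add' a b := by simp [mul_add]; ring
  map_smul' r a := by simp [smul_eq_mul]; ring

/-!
In `S = A[X,Y]` put `c = Y - t`, `d = X + s + γt`; then `q(X,Y) - q(s,t) = c·e + d·w` with
`e = δY + δt + γX` and `w = X - s`. As `d, c` is a translate of the regular sequence `X, Y`, the
only syzygies of `(c, -d)` over `S` are the multiples of `(d, c)`. Hence `c·a - d·b` is a multiple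
`(c·e + d·w)·g` exactly when `(a, b) - g·(e, -w)` is a multiple of `(d, c)`, that is, when `(a, b)`
is in the image of the matrix with columns `(e, -w)` and `(d, c)`. Reducing modulo `c·e + d·w`
identifies the kernel of `ρ`.
-/

section Regular

open RingTheory.Sequence

variable {σ A : Type*} [CommRing A]

theorem isWeaklyRegular_map_X {l : List σ} (hl : l.Nodup) :
    IsWeaklyRegular (MvPolynomial σ A) (l.map (X : σ → MvPolynomial σ A)) := by
  refine ⟨fun n hn ↦ (isSMulRegular_quotient_iff_mem_of_smul_mem _ _).2 fun p hp ↦ ?_⟩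
  have hn' : n < l.length := by simpa only [List.length_map] using hn
  have hnotMem : l[n] ∉ l.take n := by
    rw [List.mem_take_iff_getElem]
    rintro ⟨m, hm, hmn⟩
    have := (hl.getElem_inj_iff).1 hmn
    omega
  have hspan : Ideal.ofList ((l.map X).take n) =
      Ideal.span ((X : σ → MvPolynomial σ A) '' {i | i ∈ l.take n}) := by
    simp only [Ideal.ofList, ← List.map_take, List.mem_map]
    rfl
  rw [smul_eq_mul, Ideal.mul_top, hspan, mem_ideal_span_X_image] at hp ⊢
  intro m hm
  have hm' : Finsupp.single l[n] 1 + m ∈ ((l.map X)[n] • p).support := by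
    rwa [List.getElem_map, smul_eq_mul, mem_support_iff, coeff_X_mul, ← mem_support_iff]
  obtain ⟨i, hi, hmi⟩ := hp _ hm'
  have hne : l[n] ≠ i := fun h ↦ hnotMem (h ▸ hi)
  exact ⟨i, hi, by simpa [Finsupp.single_eq_of_ne' hne] using hmi⟩

/-- Translation by `c`, the automorphism `p ↦ p(X - c)` of the polynomial ring; it carries regular
sequences of variables to regular sequences of coordinates centred at `c`. -/
def translateAlgEquiv (c : σ → A) : MvPolynomial σ A ≃ₐ[A] MvPolynomial σ A :=
  AlgEquiv.ofAlgHom (aeval fun i ↦ X i - C (c i)) (aeval fun i ↦ X i + C (c i))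
    (by ext i; simp [algebraMap_eq]) (by ext i; simp [algebraMap_eq])

theorem translateAlgEquiv_X (c : σ → A) (i : σ) : translateAlgEquiv c (X i) = X i - C (c i) :=
  aeval_X _ i

theorem isWeaklyRegular_map_X_sub_C (c : σ → A) {l : List σ} (hl : l.Nodup) :
    IsWeaklyRegular (MvPolynomial σ A) (l.map fun i ↦ X i - C (c i)) := by
  refine (AddEquiv.isWeaklyRegular_congr (e := (translateAlgEquiv c).toAddEquiv) ?_).1
    (isWeaklyRegular_map_X hl)
  rw [List.forall₂_map_left_iff, List.forall₂_map_right_iff, List.forall₂_same]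
  intro i _ p
  change translateAlgEquiv c (X i * p) = (X i - C (c i)) * translateAlgEquiv c p
  rw [map_mul, translateAlgEquiv_X]

end Regular

section PairMap

open scoped Pointwise

variable {R S : Type*} [CommRing R] [CommRing S]

theorem pairMap_apply (c d : R) (x : Fin 2 → R) : pairMap c d x = c * x 0 - d * x 1 := rfl

theorem range_pairMap (c d : R) : LinearMap.range (pairMap c d) = Ideal.span {c, d} := by
  ext x
  rw [Ideal.mem_span_pair, LinearMap.mem_range]
  constructor
  · rintro ⟨a, rfl⟩
    exact ⟨a 0, -a 1, by rw [pairMap_apply]; ring⟩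
  · rintro ⟨a, b, rfl⟩
    refine ⟨![a, -b], ?_⟩
    simp only [pairMap_apply, Matrix.cons_val_zero, Matrix.cons_val_one]
    ring

theorem ker_pairMap_eq_span_of_isWeaklyRegular {c d : R}
    (h : RingTheory.Sequence.IsWeaklyRegular R [d, c]) :
    LinearMap.ker (pairMap c d) = Submodule.span R {![d, c]} := by
  obtain ⟨hd, hc⟩ := (RingTheory.Sequence.isWeaklyRegular_cons_iff R d [c]).1 h
  rw [RingTheory.Sequence.isWeaklyRegular_singleton_iff] at hc
  ext x
  rw [LinearMap.mem_ker, pairMap_apply, sub_eq_zero, Submodule.mem_span_singleton]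
  constructor
  · intro hx
    have hmem : c • x 0 ∈ d • (⊤ : Submodule R R) :=
      (Submodule.mem_smul_pointwise_iff_exists _ _ _).2 ⟨x 1, trivial, hx.symm⟩
    obtain ⟨g, -, hg : d * g = x 0⟩ := (Submodule.mem_smul_pointwise_iff_exists _ _ _).1
      (mem_of_isSMulRegular_quotient_of_smul_mem hc hmem)
    have hg' : c * g = x 1 := hd <| by
      change d * (c * g) = d * x 1
      rw [← hx, ← hg, mul_left_comm]
    refine ⟨g, ?_⟩
    ext i
    fin_cases i
    · simpa [mul_comm g] using hg
    · simpa [mul_comm g] using hg'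
  · rintro ⟨g, rfl⟩
    simp only [Matrix.smul_cons, Matrix.cons_val_zero, Matrix.cons_val_one, smul_eq_mul]
    ring

theorem mulVec_fin_two (a b c d : R) (y : Fin 2 → R) :
    !![a, b; c, d].mulVec y = y 0 • ![a, c] + y 1 • ![b, d] := by
  ext i
  fin_cases i <;> simp [Matrix.mulVec, dotProduct, Fin.sum_univ_two, mul_comm]

theorem pairMap_mulVec (c d e w : R) (y : Fin 2 → R) :
    pairMap c d (!![e, d; -w, c].mulVec y) = (c * e + d * w) * y 0 := by
  simp only [pairMap_apply, Matrix.mulVec, dotProduct, Fin.sum_univ_two, Matrix.of_apply,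
    Matrix.cons_val_zero, Matrix.cons_val_one]
  ring

theorem comap_pairMap_span_singleton {c d : R} (e w : R)
    (h : LinearMap.ker (pairMap c d) = Submodule.span R {![d, c]}) :
    Submodule.comap (pairMap c d) (Ideal.span {c * e + d * w}) =
      LinearMap.range !![e, d; -w, c].mulVecLin := by
  ext x
  rw [Submodule.mem_comap, Ideal.mem_span_singleton]
  constructor
  · rintro ⟨g, hg⟩
    have hx : x - !![e, d; -w, c].mulVec ![g, 0] ∈ LinearMap.ker (pairMap c d) := by
      rw [LinearMap.mem_ker, map_sub, hg, pairMap_mulVec, Matrix.cons_val_zero, sub_self]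
    rw [h, Submodule.mem_span_singleton] at hx
    obtain ⟨k, hk⟩ := hx
    refine ⟨![g, k], ?_⟩
    rw [Matrix.mulVecLin_apply, eq_add_of_sub_eq hk.symm, mulVec_fin_two, mulVec_fin_two]
    simp only [Matrix.cons_val_zero, Matrix.cons_val_one, zero_smul, add_zero, add_comm]
  · rintro ⟨y, rfl⟩
    exact ⟨y 0, pairMap_mulVec c d e w y⟩

theorem map_pairMap (φ : S →+* R) (c d : S) (x : Fin 2 → S) :
    φ (pairMap c d x) = pairMap (φ c) (φ d) (φ ∘ x) := by
  simp only [pairMap_apply, map_sub, map_mul, Function.comp_apply]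

theorem ker_pairMap_map_eq_range {c d e w : S} {φ : S →+* R} (hφ : Function.Surjective φ)
    (hker : RingHom.ker φ = Ideal.span {c * e + d * w})
    (h : LinearMap.ker (pairMap c d) = Submodule.span S {![d, c]}) :
    LinearMap.ker (pairMap (φ c) (φ d)) = LinearMap.range !![φ e, φ d; -φ w, φ c].mulVecLin := by
  have hrel : φ c * φ e + φ d * φ w = 0 := by
    rw [← map_mul, ← map_mul, ← map_add, ← RingHom.mem_ker, hker]
    exact Ideal.mem_span_singleton_self _
  have hmap : !![e, d; -w, c].map φ = !![φ e, φ d; -φ w, φ c] := by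
    ext i j
    fin_cases i <;> fin_cases j <;> simp
  apply le_antisymm
  · intro x hx
    obtain ⟨x, rfl⟩ := hφ.comp_left x
    rw [LinearMap.mem_ker, ← map_pairMap, ← RingHom.mem_ker, hker, ← Submodule.mem_comap,
      comap_pairMap_span_singleton e w h] at hx
    obtain ⟨y, rfl⟩ := hx
    refine ⟨φ ∘ y, funext fun i ↦ ?_⟩
    rw [← hmap]
    exact (φ.map_mulVec _ y i).symm
  · rintro _ ⟨y, rfl⟩
    rw [LinearMap.mem_ker, Matrix.mulVecLin_apply, pairMap_mulVec, hrel, zero_mul]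

end PairMap

section KeyRing

variable {A : Type*} [CommRing A] (γ δ s t : A)

theorem keyRel_eq_mul_add_mul :
    keyRel A γ δ s t = (X 1 - C t) * (C δ * X 1 + C (δ * t) + C γ * X 0) +
      (X 0 + C s + C (γ * t)) * (X 0 - C s) := by
  simp only [keyRel, map_add, map_mul, map_pow]
  ring

theorem kmk_surjective : Function.Surjective (kmk A γ δ s t) :=
  Ideal.Quotient.mk_surjective

theorem ker_kmk : RingHom.ker (kmk A γ δ s t) = Ideal.span {keyRel A γ δ s t} :=
  Ideal.mk_ker

theorem ker_pairMap_X_sub_C_X_add_C :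
    LinearMap.ker (pairMap (X 1 - C t) (X 0 + C s + C (γ * t))) =
      Submodule.span (MvPolynomial (Fin 2) A) {![X 0 + C s + C (γ * t), X 1 - C t]} := by
  refine ker_pairMap_eq_span_of_isWeaklyRegular ?_
  have hreg := isWeaklyRegular_map_X_sub_C ![-(s + γ * t), t] (l := [0, 1]) (by decide)
  simpa only [List.map_cons, List.map_nil, Matrix.cons_val_zero, Matrix.cons_val_one, map_neg,
    sub_neg_eq_add, map_add, ← add_assoc] using hreg

theorem ker_pairMap_kmk_eq_range :
    LinearMap.ker (pairMap (kmk A γ δ s t (X 1 - C t))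
        (kmk A γ δ s t (X 0 + C s + C (γ * t)))) =
      LinearMap.range !![kmk A γ δ s t (C δ * X 1 + C (δ * t) + C γ * X 0),
        kmk A γ δ s t (X 0 + C s + C (γ * t));
        kmk A γ δ s t (-(X 0 - C s)), kmk A γ δ s t (X 1 - C t)].mulVecLin := by
  rw [map_neg (kmk A γ δ s t)]
  exact ker_pairMap_map_eq_range (kmk_surjective γ δ s t)
    ((ker_kmk γ δ s t).trans (by rw [keyRel_eq_mul_add_mul])) (ker_pairMap_X_sub_C_X_add_C γ s t)

end KeyRing

/-- The map `ρ : R² → R`, `ρ(a,b) = (v - t)·a - (u + s + γt)·b`, has image the ideal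
`K = (v - t, u + s + γt)` and kernel the image of `α`; hence `coker α ≅ K` as
`R`-modules. -/
theorem stmt10 {A : Type*} [CommRing A] (γ δ s t : A)
    (α : Matrix (Fin 2) (Fin 2) (KeyRing A γ δ s t))
    (hα : α = !![kmk A γ δ s t (C δ * X 1 + C (δ * t) + C γ * X 0),
                 kmk A γ δ s t (X 0 + C s + C (γ * t));
                 kmk A γ δ s t (-(X 0 - C s)), kmk A γ δ s t (X 1 - C t)]) :
    LinearMap.range (pairMap (kmk A γ δ s t (X 1 - C t))
          (kmk A γ δ s t (X 0 + C s + C (γ * t))))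
        = (Ideal.span {kmk A γ δ s t (X 1 - C t), kmk A γ δ s t (X 0 + C s + C (γ * t))} :
            Ideal (KeyRing A γ δ s t)) ∧
    LinearMap.ker (pairMap (kmk A γ δ s t (X 1 - C t))
          (kmk A γ δ s t (X 0 + C s + C (γ * t))))
        = LinearMap.range α.mulVecLin ∧
    Nonempty (((Fin 2 → KeyRing A γ δ s t) ⧸ LinearMap.range α.mulVecLin) ≃ₗ[KeyRing A γ δ s t]
      (Ideal.span {kmk A γ δ s t (X 1 - C t), kmk A γ δ s t (X 0 + C s + C (γ * t))} :
        Ideal (KeyRing A γ δ s t))) := by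
  subst hα
  have hrange := range_pairMap (kmk A γ δ s t (X 1 - C t)) (kmk A γ δ s t (X 0 + C s + C (γ * t)))
  have hker := ker_pairMap_kmk_eq_range γ δ s t
  exact ⟨hrange, hker, ⟨(Submodule.quotEquivOfEq _ _ hker.symm).trans
    ((LinearMap.quotKerEquivRange _).trans (LinearEquiv.ofEq _ _ hrange))⟩⟩
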